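/- Let S¹ denote the unit circle (e.g. the unit circle in ℂ), let T² = S¹ × S¹ be the torus, and let f : T² → S¹ be the projection onto the first coordinate, f(x, y) = x. Then for every continuous map g : T² → S¹ that is nullhomotopic (homotopic to a constant map), there exists a point (x, y) ∈ T² with f(x, y) = g(x, y), i.e. g(x, y) = x. -/

import Mathlib

/-- Section 5 of the paper: the projection of the torus onto
the circle is weakly coincidence-producing.  Let `f : T² = S¹ × S¹ → S¹` be
the first-coordinate projection.  Every nullhomotopic continuous map
`g : T² → S¹` has a coincidence with `f`: there is `p = (x, y)` with
`g p = p.1 = x`. -/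
theorem stmt7 (g : C(Circle × Circle, Circle)) (hg : g.Nullhomotopic) :
    ∃ p : Circle × Circle, g p = p.1 := by
  obtain ⟨y, hy⟩ := hg
  obtain ⟨H⟩ := hy.symm
  have cov : IsCoveringMap Circle.exp := Circle.isCoveringMap_exp
  obtain ⟨e, he⟩ : ∃ e : ℝ, Circle.exp e = y := ⟨_, Circle.exp_arg y⟩
  have H0 : ∀ a, H.toContinuousMap (0, a) = Circle.exp (ContinuousMap.const _ e a) := by
    intro a
    simpa [he] using H.apply_zero a
  let L := cov.liftHomotopy H.toContinuousMap (ContinuousMap.const _ e) H0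
  have hL : ∀ x, Circle.exp (L x) = H x := fun x =>
    congrFun (cov.liftHomotopy_lifts H.toContinuousMap (ContinuousMap.const _ e) H0) x
  let θ : C(ℝ, ℝ) := L.comp
    ⟨fun t => (1, (Circle.exp t, 1)), by fun_prop⟩
  have hθ : ∀ t, Circle.exp (θ t) = g (Circle.exp t, 1) := fun t => by
    rw [← H.apply_one]; exact hL _
  obtain ⟨C, hC⟩ := (isCompact_range L.continuous).isBounded.exists_norm_le
  have hb : ∀ t, |θ t| ≤ C := fun t => hC _ ⟨_, rfl⟩
  have hC0 : 0 ≤ C := (abs_nonneg _).trans (hb 0)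
  obtain ⟨t, -, ht⟩ := intermediate_value_Icc (f := fun t => t - θ t) (by linarith : -C ≤ C)
    (by fun_prop) (show (0:ℝ) ∈ _ from
      ⟨by linarith [(abs_le.1 (hb (-C))).1], by linarith [(abs_le.1 (hb C)).2]⟩)
  refine ⟨(Circle.exp t, 1), ?_⟩
  rw [← hθ t]
  congr 1
  simp only at ht
  linarith
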